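/- (Gaussian limit of the log-target increment.) For each dimension d, let π^(d) be an everywhere-positive probability density on ℝ^d with L^(d) = log π^(d) twice continuously differentiable, let X^(d) ∼ π^(d) and Z^(d) ∼ N(0, I_d) be independent, and suppose there exist s^(d) > 0 such that as d → ∞: ‖∇L^(d)(X^(d))‖/s^(d) → 1 in probability; ΔL^(d)(X^(d))/(s^(d))² → −1 in probability; Trace[(H^(d)(X^(d)))²]/(s^(d))⁴ → 0 in probability; and for all σ, ε > 0, P(sup_{t∈(0,1)} |⟨Z^(d), [H^(d)(X^(d)+tσZ^(d)/s^(d)) − H^(d)(X^(d))]Z^(d)⟩|/(s^(d))² > ε) → 0, where H^(d) is the Hessian of L^(d). Fix ℓ > 0 and set λ^(d) = ℓ/s^(d). Then L^(d)(X^(d) + λ^(d) Z^(d)) − L^(d)(X^(d)) converges in distribution, as d → ∞, to a Gaussian random variable with mean −ℓ²/2 and variance ℓ². -/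

import Mathlib

open MeasureTheory ProbabilityTheory Real Filter Topology

/-- The standard Gaussian measure `N(0, I_d)` on `ℝ^d`. -/
noncomputable def stdGaussian (d : ℕ) : Measure (Fin d → ℝ) :=
  Measure.pi fun _ : Fin d => gaussianReal 0 1

/-- The Hessian matrix `H(x) = [∂²_{ij} L(x)]` of a function `L` on `ℝ^d`. -/
noncomputable def hessian {d : ℕ} (L : (Fin d → ℝ) → ℝ) (x : Fin d → ℝ) :
    Matrix (Fin d) (Fin d) ℝ := fun i j =>
  fderiv ℝ (fun y => fderiv ℝ L y (Pi.single j 1)) x (Pi.single i 1)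

/-- The squared Euclidean norm of the gradient of `L` at `x`, `‖∇L(x)‖²`. -/
noncomputable def gradNormSq {d : ℕ} (L : (Fin d → ℝ) → ℝ) (x : Fin d → ℝ) : ℝ :=
  ∑ i, (fderiv ℝ L x (Pi.single i 1)) ^ 2

lemma aux_prob (d : ℕ) : IsProbabilityMeasure (_root_.stdGaussian d) := by
  unfold _root_.stdGaussian; infer_instance

lemma aux_int (n : ℕ) : Integrable (fun u : ℝ => u ^ n) (gaussianReal 0 1) := by
  have := (memLp_id_gaussianReal (μ := 0) (v := 1) n).integrable_norm_pow'
  rw [← integrable_norm_iff (by fun_prop)]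
  simpa using this

lemma aux_mom (n : ℕ) : ∫ u, u ^ n ∂(gaussianReal 0 1)
    = iteratedDeriv n (fun t : ℝ => rexp (t ^ 2 / 2)) 0 := by
  have h := iteratedDeriv_mgf_zero (X := id) (μ := gaussianReal 0 1) (by simp) n
  rw [mgf_id_gaussianReal] at h
  simp at h
  rw [← h]

lemma aux_d0 (t : ℝ) : HasDerivAt (fun t : ℝ => rexp (t ^ 2 / 2)) (t * rexp (t ^ 2 / 2)) t := by
  have h1 : HasDerivAt (fun t : ℝ => t ^ 2 / 2) t t := by
    have := (hasDerivAt_pow 2 t).div_const 2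
    simpa using this
  simpa [mul_comm] using h1.exp

lemma aux_d1 : deriv (fun t : ℝ => rexp (t ^ 2 / 2)) = fun t => t * rexp (t ^ 2 / 2) :=
  funext fun t => (aux_d0 t).deriv

lemma aux_dp (p p' : ℝ → ℝ) (hp : ∀ t, HasDerivAt p (p' t) t) :
    deriv (fun t : ℝ => p t * rexp (t ^ 2 / 2))
      = fun t => (p' t + t * p t) * rexp (t ^ 2 / 2) := by
  funext t
  have h := ((hp t).fun_mul (aux_d0 t)).deriv
  rw [h]; ring

lemma aux_m0 : ∫ u, u ^ 0 ∂(gaussianReal 0 1) = 1 := by simp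
lemma aux_id1 : iteratedDeriv 1 (fun t : ℝ => rexp (t ^ 2 / 2)) = fun t => t * rexp (t ^ 2 / 2) := by
  rw [iteratedDeriv_one, aux_d1]
lemma aux_id2 : iteratedDeriv 2 (fun t : ℝ => rexp (t ^ 2 / 2))
    = fun t => (1 + t * t) * rexp (t ^ 2 / 2) := by
  rw [iteratedDeriv_succ, aux_id1, aux_dp _ _ (fun t => hasDerivAt_id' t)]
lemma aux_id3 : iteratedDeriv 3 (fun t : ℝ => rexp (t ^ 2 / 2))
    = fun t => ((t + t) + t * (1 + t * t)) * rexp (t ^ 2 / 2) := by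
  rw [iteratedDeriv_succ, aux_id2, aux_dp _ (fun t => t + t)]
  intro t
  have := ((hasDerivAt_id' t).mul (hasDerivAt_id' t)).const_add 1
  simpa using this
lemma aux_id4 : iteratedDeriv 4 (fun t : ℝ => rexp (t ^ 2 / 2)) 0 = 3 := by
  rw [iteratedDeriv_succ, aux_id3, aux_dp _ (fun t => 3 + 3 * t ^ 2)]
  · simp
  intro t
  have h1 := ((hasDerivAt_id' t).mul (hasDerivAt_id' t)).const_add 1
  have h2 := ((hasDerivAt_id' t).add (hasDerivAt_id' t)).add ((hasDerivAt_id' t).mul h1)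
  refine HasDerivAt.congr_deriv (f := fun t => (t + t) + t * (1 + t * t)) h2 ?_
  simp only [Pi.mul_apply]
  ring

lemma aux_m1 : ∫ u, u ^ 1 ∂(gaussianReal 0 1) = 0 := by rw [aux_mom, aux_id1]; simp
lemma aux_m2 : ∫ u, u ^ 2 ∂(gaussianReal 0 1) = 1 := by rw [aux_mom, aux_id2]; simp
lemma aux_m3 : ∫ u, u ^ 3 ∂(gaussianReal 0 1) = 0 := by rw [aux_mom, aux_id3]; simp
lemma aux_m4 : ∫ u, u ^ 4 ∂(gaussianReal 0 1) = 3 := by rw [aux_mom, aux_id4]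

lemma aux_mono_eq {d : ℕ} (i j k l : Fin d) (z : Fin d → ℝ) : z i * z j * z k * z l =
    ∏ m, z m ^ ((if i = m then 1 else 0) + (if j = m then 1 else 0) + (if k = m then 1 else 0)
      + (if l = m then 1 else 0)) := by
  simp only [pow_add, Finset.prod_mul_distrib]; simp [pow_ite]

lemma aux_mono_int {d : ℕ} (i j k l : Fin d) :
    Integrable (fun z : Fin d → ℝ => z i * z j * z k * z l) (_root_.stdGaussian d) := by
  simp_rw [aux_mono_eq]
  exact Integrable.fintype_prod (fun m => aux_int _)

lemma aux_iss {d : ℕ} (i j k l : Fin d) :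
    ∫ z, z i * z j * z k * z l ∂(_root_.stdGaussian d) =
     (if i = j ∧ k = l then 1 else 0) + (if i = k ∧ j = l then 1 else 0)
      + (if i = l ∧ j = k then 1 else 0) := by
  simp_rw [aux_mono_eq]
  unfold _root_.stdGaussian
  rw [integral_fintype_prod_eq_prod (fun m (u : ℝ) => u ^ ((if i = m then 1 else 0) +
    (if j = m then 1 else 0) + (if k = m then 1 else 0) + (if l = m then 1 else 0)))]
  have m0 := aux_m0
  have m1 := aux_m1
  have m2 := aux_m2
  have m3 := aux_m3
  have m4 := aux_m4
  have two : ∀ a b : Fin d, a ≠ b → ∀ e : Fin d → ℕ, (∀ m, e m = if m = a then 2 else if m = b then 2 else 0) →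
      ∏ m, ∫ u, u ^ (e m) ∂(gaussianReal 0 1) = 1 := by
    intro a b hab e he
    apply Finset.prod_eq_one
    intro m _
    rw [he]; split_ifs <;> assumption
  have zero : ∀ e : Fin d → ℕ, (∃ m, e m = 1 ∨ e m = 3) →
      ∏ m, ∫ u, u ^ (e m) ∂(gaussianReal 0 1) = 0 := by
    rintro e ⟨m, hm⟩
    apply Finset.prod_eq_zero (Finset.mem_univ m)
    rcases hm with h | h <;> rw [h] <;> assumption
  by_cases hij : i = j
  · subst hij
    by_cases hkl : k = l
    · subst hkl
      by_cases hik : i = k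
      · subst hik
        rw [Finset.prod_eq_single i]
        · simp; rw [m4]; norm_num
        · intro b _ hb; simp [hb.symm]
        · simp
      · rw [two i k hik _ (by intro m; grind)]
        simp [hik]
    · rw [zero _ (by by_cases h : i = k; exact ⟨l, by grind⟩; exact ⟨k, by grind⟩)]
      grind
  · by_cases hik : i = k
    · subst hik
      by_cases hjl : j = l
      · subst hjl
        rw [two i j hij _ (by intro m; grind)]
        grind
      · rw [zero _ (⟨j, by grind⟩)]
        grind
    · by_cases hil : i = l
      · subst hil
        by_cases hjk : j = k
        · subst hjk
          rw [two i j hij _ (by intro m; grind)]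
          grind
        · rw [zero _ (⟨j, by grind⟩)]
          grind
      · rw [zero _ (⟨i, by grind⟩)]
        grind

lemma aux_mono_int2 {d : ℕ} (i j : Fin d) :
    Integrable (fun z : Fin d → ℝ => z i * z j) (_root_.stdGaussian d) := by
  have : ∀ z : Fin d → ℝ, z i * z j =
      ∏ m, z m ^ ((if i = m then 1 else 0) + (if j = m then 1 else 0)) := by
    intro z; simp only [pow_add, Finset.prod_mul_distrib]; simp [pow_ite]
  simp_rw [this]
  exact Integrable.fintype_prod (fun m => aux_int _)

lemma aux_iss2 {d : ℕ} (i j : Fin d) :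
    ∫ z, z i * z j ∂(_root_.stdGaussian d) = if i = j then 1 else 0 := by
  have : ∀ z : Fin d → ℝ, z i * z j =
      ∏ m, z m ^ ((if i = m then 1 else 0) + (if j = m then 1 else 0)) := by
    intro z; simp only [pow_add, Finset.prod_mul_distrib]; simp [pow_ite]
  simp_rw [this]
  unfold _root_.stdGaussian
  rw [integral_fintype_prod_eq_prod (fun m (u : ℝ) => u ^ ((if i = m then 1 else 0) +
    (if j = m then 1 else 0)))]
  have m0 := aux_m0
  have m1 := aux_m1
  have m2 := aux_m2
  by_cases hij : i = j
  · subst hij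
    rw [if_pos rfl]
    apply Finset.prod_eq_one
    intro m _
    by_cases h : i = m
    · simpa [h] using m2
    · simp [h]
  · rw [if_neg hij]
    apply Finset.prod_eq_zero (Finset.mem_univ i)
    simp [Ne.symm hij]

lemma aux_int_lin {Ω : Type*} [MeasurableSpace Ω] (P : Measure Ω) [IsProbabilityMeasure P]
    (f g h : Ω → ℝ) (C a b e : ℝ) (hf : Integrable f P) (hg : Integrable g P)
    (hh : Integrable h P) :
    Integrable (fun z => C * (f z - a * g z - b * h z + e)) P ∧
    ∫ z, C * (f z - a * g z - b * h z + e) ∂P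
      = C * (∫ z, f z ∂P - a * ∫ z, g z ∂P - b * ∫ z, h z ∂P + e) := by
  have h1 : Integrable (fun z => f z - a * g z) P := hf.sub (hg.const_mul a)
  have h2 : Integrable (fun z => f z - a * g z - b * h z) P := h1.sub (hh.const_mul b)
  refine ⟨(h2.add (integrable_const e)).const_mul C, ?_⟩
  rw [integral_const_mul, integral_add h2 (integrable_const e), integral_sub h1 (hh.const_mul b),
    integral_sub hf (hg.const_mul a), integral_const_mul, integral_const_mul]
  simp

lemma aux_quad_sq {d : ℕ} (H : Matrix (Fin d) (Fin d) ℝ) (hH : ∀ i j, H i j = H j i) :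
    Integrable (fun z : Fin d → ℝ => ((∑ i, ∑ j, z i * H i j * z j) - H.trace) ^ 2)
      (_root_.stdGaussian d) ∧
    ∫ z, ((∑ i, ∑ j, z i * H i j * z j) - H.trace) ^ 2 ∂(_root_.stdGaussian d)
      = 2 * (H * H).trace := by
  have := aux_prob d
  have htr : H.trace = ∑ i, ∑ j, H i j * (if i = j then 1 else 0) := by
    simp [Matrix.trace]
  have key : ∀ z : Fin d → ℝ, ((∑ i, ∑ j, z i * H i j * z j) - H.trace) ^ 2 =
      ∑ i, ∑ j, ∑ k, ∑ l, H i j * H k l * (z i * z j * z k * z l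
        - (if k = l then 1 else 0) * (z i * z j) - (if i = j then 1 else 0) * (z k * z l)
        + (if i = j then 1 else 0) * (if k = l then 1 else 0)) := by
    intro z
    have : (∑ i, ∑ j, z i * H i j * z j) - H.trace
      = ∑ i, ∑ j, H i j * (z i * z j - if i = j then 1 else 0) := by
      rw [htr, ← Finset.sum_sub_distrib]
      refine Finset.sum_congr rfl fun i _ => ?_
      rw [← Finset.sum_sub_distrib]
      refine Finset.sum_congr rfl fun j _ => ?_
      ring
    rw [this, sq, Finset.sum_mul]
    refine Finset.sum_congr rfl fun i _ => ?_
    rw [Finset.sum_mul]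
    refine Finset.sum_congr rfl fun j _ => ?_
    rw [Finset.mul_sum]
    refine Finset.sum_congr rfl fun k _ => ?_
    rw [Finset.mul_sum]
    refine Finset.sum_congr rfl fun l _ => ?_
    ring
  have hint : ∀ i j k l : Fin d, Integrable (fun z : Fin d → ℝ =>
      H i j * H k l * (z i * z j * z k * z l
        - (if k = l then 1 else 0) * (z i * z j) - (if i = j then 1 else 0) * (z k * z l)
        + (if i = j then 1 else 0) * (if k = l then 1 else 0))) (_root_.stdGaussian d) := by
    intro i j k l
    exact (aux_int_lin _ _ _ _ _ _ _ _ (aux_mono_int i j k l) (aux_mono_int2 i j)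
      (aux_mono_int2 k l)).1
  have hval : ∀ i j k l : Fin d, ∫ z : Fin d → ℝ,
      H i j * H k l * (z i * z j * z k * z l
        - (if k = l then 1 else 0) * (z i * z j) - (if i = j then 1 else 0) * (z k * z l)
        + (if i = j then 1 else 0) * (if k = l then 1 else 0)) ∂(_root_.stdGaussian d)
      = H i j * H k l * (if i = k ∧ j = l then 1 else 0)
        + H i j * H k l * (if i = l ∧ j = k then 1 else 0) := by
    intro i j k l
    rw [(aux_int_lin _ _ _ _ _ _ _ _ (aux_mono_int i j k l) (aux_mono_int2 i j)
      (aux_mono_int2 k l)).2, aux_iss, aux_iss2, aux_iss2]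
    have e1 : (if i = j ∧ k = l then (1 : ℝ) else 0)
        = (if i = j then 1 else 0) * (if k = l then 1 else 0) := by
      rw [ite_and]; split_ifs <;> simp
    rw [e1]
    ring
  simp_rw [key]
  have i1 := fun i j k => integrable_finsetSum Finset.univ (fun l _ => hint i j k l)
  have i2 := fun i j => integrable_finsetSum Finset.univ (fun k _ => i1 i j k)
  have i3 := fun i => integrable_finsetSum Finset.univ (fun j _ => i2 i j)
  refine ⟨integrable_finsetSum Finset.univ (fun i _ => i3 i), ?_⟩
  rw [integral_finsetSum _ (fun i _ => i3 i)]
  simp_rw [integral_finsetSum _ (fun j _ => i2 _ j), integral_finsetSum _ (fun k _ => i1 _ _ k),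
    integral_finsetSum _ (fun l _ => hint _ _ _ l), hval, Finset.sum_add_distrib]
  simp only [Matrix.trace, Matrix.diag, Matrix.mul_apply, two_mul]
  congr 1
  · refine Finset.sum_congr rfl fun i _ => ?_
    refine Finset.sum_congr rfl fun j _ => ?_
    rw [Finset.sum_eq_single i, Finset.sum_eq_single j]
    · simp [hH i j]
    · intro b _ hb; simp [hb.symm]
    · simp
    · intro b _ hb; simp [hb.symm]
    · simp
  · refine Finset.sum_congr rfl fun i _ => ?_
    refine Finset.sum_congr rfl fun j _ => ?_
    rw [Finset.sum_eq_single j, Finset.sum_eq_single i]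
    · simp
    · intro b _ hb; simp [hb.symm]
    · simp
    · intro b _ hb; simp [hb.symm]
    · simp

lemma aux_cheb {d : ℕ} (H : Matrix (Fin d) (Fin d) ℝ) (hH : ∀ i j, H i j = H j i) (s ε : ℝ)
    (hs : 0 < s) (hε : 0 < ε) :
    (_root_.stdGaussian d).real
      {z | ε < |(∑ i, ∑ j, z i * H i j * z j) / s ^ 2 - H.trace / s ^ 2|}
      ≤ 2 / ε ^ 2 * |(H * H).trace / s ^ 4| := by
  have := aux_prob d
  obtain ⟨hi, hv⟩ := aux_quad_sq H hH
  have h := mul_meas_ge_le_integral_of_nonneg (ae_of_all _ fun z => sq_nonneg _) hi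
    ((ε * s ^ 2) ^ 2)
  rw [hv] at h
  have hsub : (_root_.stdGaussian d).real
      {z | ε < |(∑ i, ∑ j, z i * H i j * z j) / s ^ 2 - H.trace / s ^ 2|} ≤
      (_root_.stdGaussian d).real
      {z | (ε * s ^ 2) ^ 2 ≤ ((∑ i, ∑ j, z i * H i j * z j) - H.trace) ^ 2} := by
    refine measureReal_mono ?_ (measure_ne_top _ _)
    intro z hz
    simp only [Set.mem_ofPred_eq] at hz ⊢
    rw [← sub_div, abs_div, abs_of_pos (by positivity : 0 < s ^ 2), lt_div_iff₀ (by positivity)] at hz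
    rw [← sq_abs (_ - _)]
    gcongr
  refine hsub.trans ?_
  have h2 : 2 / ε ^ 2 * ((H * H).trace / s ^ 4) ≤ 2 / ε ^ 2 * |(H * H).trace / s ^ 4| := by
    gcongr; exact le_abs_self _
  refine le_trans ?_ h2
  have : 2 / ε ^ 2 * ((H * H).trace / s ^ 4) = (2 * (H * H).trace) / (ε * s ^ 2) ^ 2 := by
    field_simp
  rw [this, le_div_iff₀ (by positivity)]
  linarith

lemma aux_lin {d : ℕ} (a : Fin d → ℝ) (c r : ℝ) (hr : r ^ 2 = c ^ 2 * ∑ i, a i ^ 2) :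
    (_root_.stdGaussian d).map (fun z => c * ∑ i, a i * z i)
      = (gaussianReal 0 1).map (fun u => r * u) := by
  have := aux_prob d
  have hm : Measurable (fun z : Fin d → ℝ => c * ∑ i, a i * z i) :=
    Continuous.measurable (by fun_prop)
  have : IsProbabilityMeasure ((_root_.stdGaussian d).map (fun z => c * ∑ i, a i * z i)) :=
    Measure.isProbabilityMeasure_map hm.aemeasurable
  have : IsProbabilityMeasure ((gaussianReal 0 1).map (fun u => r * u)) :=
    Measure.isProbabilityMeasure_map (by fun_prop)
  apply Measure.ext_of_charFun
  ext t
  rw [gaussianReal_map_const_mul, charFun_gaussianReal, charFun_apply_real,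
    integral_map hm.aemeasurable (by fun_prop)]
  have : ∀ z : Fin d → ℝ, Complex.exp (t * ((c * ∑ i, a i * z i : ℝ) : ℂ) * Complex.I) =
      ∏ i, Complex.exp (((t * c * a i : ℝ) : ℂ) * (z i : ℂ) * Complex.I) := by
    intro z
    rw [← Complex.exp_sum]
    congr 1
    push_cast
    rw [Finset.mul_sum, Finset.mul_sum, Finset.sum_mul]
    refine Finset.sum_congr rfl fun i _ => ?_
    ring
  simp_rw [this]
  unfold _root_.stdGaussian
  rw [integral_fintype_prod_eq_prod (fun i (u : ℝ) =>
    Complex.exp (((t * c * a i : ℝ) : ℂ) * (u : ℂ) * Complex.I))]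
  simp_rw [← charFun_apply_real, charFun_gaussianReal]
  rw [← Complex.exp_sum]
  congr 1
  have hr' : (r : ℂ) ^ 2 = c ^ 2 * ∑ i, (a i : ℂ) ^ 2 := by exact_mod_cast hr
  simp [hr']
  rw [Finset.mul_sum, Finset.sum_mul, Finset.sum_div]
  refine Finset.sum_congr rfl fun i _ => ?_
  ring

lemma aux_fderiv_sum {d : ℕ} (T : (Fin d → ℝ) →L[ℝ] ℝ) (v : Fin d → ℝ) :
    T v = ∑ i, v i * T (Pi.single i 1) := by
  have := T.toLinearMap.pi_apply_eq_sum_univ v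
  simp only [ContinuousLinearMap.coe_coe, smul_eq_mul] at this
  rw [this]
  refine Finset.sum_congr rfl fun i _ => ?_
  congr 2
  ext j
  simp [Pi.single_apply, eq_comm]

lemma aux_cd {d : ℕ} {L : (Fin d → ℝ) → ℝ} (hL : ContDiff ℝ 2 L) (v : Fin d → ℝ) :
    ContDiff ℝ 1 (fun y => fderiv ℝ L y v) :=
  (hL.fderiv_right (m := 1) (by norm_num)).clm_apply contDiff_const

lemma aux_hess_cont {d : ℕ} {L : (Fin d → ℝ) → ℝ} (hL : ContDiff ℝ 2 L) (i j : Fin d) :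
    Continuous (fun x => hessian L x i j) := by
  unfold hessian
  exact ((aux_cd hL (Pi.single j 1)).continuous_fderiv (by norm_num)).clm_apply continuous_const

lemma aux_hess_symm {d : ℕ} {L : (Fin d → ℝ) → ℝ} (hL : ContDiff ℝ 2 L) (x) (i j : Fin d) :
    hessian L x i j = hessian L x j i := by
  have hd : DifferentiableAt ℝ (fderiv ℝ L) x :=
    ((hL.fderiv_right (m := 1) (by norm_num)).differentiable (by norm_num)) x
  have h : ∀ i j, hessian L x i j = fderiv ℝ (fderiv ℝ L) x (Pi.single i 1) (Pi.single j 1) := by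
    intro i j
    unfold hessian
    rw [fderiv_clm_apply hd (differentiableAt_const _)]
    simp
  rw [h, h]
  exact (hL.contDiffAt (x := x)).isSymmSndFDerivAt (by simp) _ _

lemma aux_taylor {d : ℕ} {L : (Fin d → ℝ) → ℝ} (hL : ContDiff ℝ 2 L) (x z : Fin d → ℝ) (c : ℝ) :
    ∃ t ∈ Set.Ioo (0 : ℝ) 1, L (x + c • z) - L x =
      c * ∑ i, fderiv ℝ L x (Pi.single i 1) * z i
      + c ^ 2 / 2 * ∑ i, ∑ j, z i * hessian L (x + (t * c) • z) i j * z j := by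
  have hline : ∀ t : ℝ, HasDerivAt (fun t : ℝ => x + (t * c) • z) (c • z) t := by
    intro t
    have := (((hasDerivAt_id' t).mul_const c).smul_const z).const_add x
    simpa using this
  have h1 : ∀ t : ℝ, HasDerivAt (fun t : ℝ => L (x + (t * c) • z))
      (fderiv ℝ L (x + (t * c) • z) (c • z)) t := by
    intro t
    exact ((hL.differentiable (by norm_num)) _).hasFDerivAt.comp_hasDerivAt t (hline t)
  have h2 : ∀ t : ℝ, HasDerivAt (fun t : ℝ => fderiv ℝ L (x + (t * c) • z) (c • z))
      (c ^ 2 * ∑ i, ∑ j, z i * hessian L (x + (t * c) • z) i j * z j) t := by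
    intro t
    have e : (fun t : ℝ => fderiv ℝ L (x + (t * c) • z) (c • z))
        = fun t => ∑ j, (c * z j) * fderiv ℝ L (x + (t * c) • z) (Pi.single j 1) := by
      funext t
      rw [aux_fderiv_sum]
      simp
    rw [e]
    have h3 : ∀ j, HasDerivAt (fun t : ℝ => fderiv ℝ L (x + (t * c) • z) (Pi.single j 1))
        (fderiv ℝ (fun y => fderiv ℝ L y (Pi.single j 1)) (x + (t * c) • z) (c • z)) t := by
      intro j
      exact (((aux_cd hL (Pi.single j 1)).differentiable (by norm_num)) _).hasFDerivAt.comp_hasDerivAt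
        t (hline t)
    refine (HasDerivAt.fun_sum (fun j _ => (h3 j).const_mul (c * z j))).congr_deriv ?_
    rw [Finset.sum_comm, Finset.mul_sum]
    refine Finset.sum_congr rfl fun j _ => ?_
    rw [aux_fderiv_sum, Finset.mul_sum, Finset.mul_sum]
    refine Finset.sum_congr rfl fun i _ => ?_
    simp only [hessian, Pi.smul_apply, smul_eq_mul]
    ring
  have hG : ∀ t : ℝ, HasDerivAt (fun t : ℝ => L (x + (t * c) • z)
      + fderiv ℝ L (x + (t * c) • z) (c • z) * (1 - t))
      ((c ^ 2 * ∑ i, ∑ j, z i * hessian L (x + (t * c) • z) i j * z j) * (1 - t)) t := by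
    intro t
    refine ((h1 t).fun_add ((h2 t).fun_mul ((hasDerivAt_id' t).const_sub 1))).congr_deriv ?_
    ring
  have hh : ∀ t : ℝ, HasDerivAt (fun t : ℝ => -(1 - t) ^ 2 / 2) (1 - t) t := by
    intro t
    refine ((((hasDerivAt_id' t).const_sub 1).fun_pow 2).fun_neg.div_const 2).congr_deriv ?_
    simp
  obtain ⟨t, ht, heq⟩ := exists_ratio_hasDerivAt_eq_ratio_slope _ _ (zero_lt_one' ℝ)
    (fun t _ => (hG t).continuousAt.continuousWithinAt) (fun t _ => hG t)
    _ _ (fun t _ => (hh t).continuousAt.continuousWithinAt) (fun t _ => hh t)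
  refine ⟨t, ht, ?_⟩
  have hne : (1 - t) ≠ 0 := by have := ht.2; linarith
  have hf : fderiv ℝ L x (c • z) = c * ∑ i, fderiv ℝ L x (Pi.single i 1) * z i := by
    rw [aux_fderiv_sum, Finset.mul_sum]
    refine Finset.sum_congr rfl fun i _ => ?_
    simp; ring
  simp only [zero_mul, zero_smul, add_zero, one_mul, sub_self, sub_zero, mul_zero] at heq
  rw [← hf]
  apply mul_right_cancel₀ hne
  linear_combination -heq

lemma aux_bound {Ω : Type*} [MeasurableSpace Ω] (P : Measure Ω) [IsProbabilityMeasure P]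
    (f : Ω → ℝ) (a b : ℝ) (ha : 0 ≤ a) (hb : ∀ x, |f x| ≤ b) :
    |∫ x, f x ∂P| ≤ a + b * P.real {x | a < |f x|} := by
  set T := toMeasurable P {x | a < |f x|} with hT
  have hTm : MeasurableSet T := measurableSet_toMeasurable _ _
  have hPT : P.real T = P.real {x | a < |f x|} := by
    simp [Measure.real, hT, measure_toMeasurable]
  have hi : Integrable (fun x => a + T.indicator (fun _ => b) x) P :=
    (integrable_const a).add ((integrable_const b).indicator hTm)
  have h := norm_integral_le_of_norm_le hi (f := f) (ae_of_all _ fun x => by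
    rw [Real.norm_eq_abs]
    by_cases hx : x ∈ T
    · simp only [Set.indicator_of_mem hx]; linarith [hb x]
    · simp only [Set.indicator_of_notMem hx]
      have : x ∉ {x | a < |f x|} := fun h => hx (subset_toMeasurable _ _ h)
      simpa using this)
  rw [integral_add (integrable_const a) ((integrable_const b).indicator hTm),
    integral_indicator hTm] at h
  simp at h
  rw [hPT] at h
  linarith

lemma aux_conv {Ω : ℕ → Type*} [∀ d, MeasurableSpace (Ω d)] (P : (d : ℕ) → Measure (Ω d))
    [∀ d, IsProbabilityMeasure (P d)] (f : (d : ℕ) → Ω d → ℝ) (b : ℝ) (hb : ∀ d x, |f d x| ≤ b)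
    (h : ∀ ε > (0 : ℝ), Tendsto (fun d => P d {x | ε < |f d x|}) atTop (𝓝 0)) :
    Tendsto (fun d => ∫ x, f d x ∂(P d)) atTop (𝓝 0) := by
  rw [Metric.tendsto_atTop']
  intro ε hε
  have h1 := (ENNReal.tendsto_toReal (ENNReal.zero_ne_top)).comp (h (ε / 2) (by positivity))
  have h2 := h1.const_mul b
  simp only [ENNReal.toReal_zero, mul_zero] at h2
  have h3 := (h2.eventually (gt_mem_nhds (show (0:ℝ) < ε / 2 by positivity)))
  obtain ⟨N, hN⟩ := eventually_atTop.1 h3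
  refine ⟨N, fun d hd => ?_⟩
  have h4 := hN d hd.le
  have h5 := aux_bound (P d) (f d) (ε / 2) b (by positivity) (hb d)
  simp only [Function.comp, Measure.real] at h4 h5
  rw [Real.dist_eq, sub_zero]
  linarith

lemma aux_quadP (L : (d : ℕ) → (Fin d → ℝ) → ℝ) (hL_smooth : ∀ d, ContDiff ℝ 2 (L d))
    (μX : (d : ℕ) → Measure (Fin d → ℝ)) (hμX_prob : ∀ d, IsProbabilityMeasure (μX d))
    (s : ℕ → ℝ) (hs_pos : ∀ d, 0 < s d)
    (htrace : ∀ ε > (0 : ℝ), Tendsto (fun d =>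
      μX d {x | ε < |Matrix.trace (hessian (L d) x * hessian (L d) x) / (s d) ^ 4|})
      atTop (𝓝 0)) (ε : ℝ) (hε : 0 < ε) :
    Tendsto (fun d => ((μX d).prod (_root_.stdGaussian d))
      {p | ε < |(∑ i, ∑ j, p.2 i * hessian (L d) p.1 i j * p.2 j) / (s d) ^ 2
        - Matrix.trace (hessian (L d) p.1) / (s d) ^ 2|}) atTop (𝓝 0) := by
  have hγ := aux_prob
  have hB : ∀ d, MeasurableSet {p : (Fin d → ℝ) × (Fin d → ℝ) |
      ε < |(∑ i, ∑ j, p.2 i * hessian (L d) p.1 i j * p.2 j) / (s d) ^ 2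
        - Matrix.trace (hessian (L d) p.1) / (s d) ^ 2|} := by
    intro d
    have hc : ∀ i j, Continuous (fun p : (Fin d → ℝ) × (Fin d → ℝ) => hessian (L d) p.1 i j) :=
      fun i j => (aux_hess_cont (hL_smooth d) i j).comp continuous_fst
    apply IsOpen.measurableSet
    apply isOpen_lt continuous_const
    simp only [Matrix.trace, Matrix.diag]
    fun_prop
  rw [← ENNReal.tendsto_toReal_zero_iff (fun d => measure_ne_top _ _)]
  have heq : ∀ d, (((μX d).prod (_root_.stdGaussian d))
      {p | ε < |(∑ i, ∑ j, p.2 i * hessian (L d) p.1 i j * p.2 j) / (s d) ^ 2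
        - Matrix.trace (hessian (L d) p.1) / (s d) ^ 2|}).toReal
      = ∫ x, (_root_.stdGaussian d).real {z | ε < |(∑ i, ∑ j, z i * hessian (L d) x i j * z j)
          / (s d) ^ 2 - Matrix.trace (hessian (L d) x) / (s d) ^ 2|} ∂(μX d) := by
    intro d
    rw [Measure.prod_apply (hB d), ← integral_toReal]
    · rfl
    · exact (measurable_measure_prodMk_left (hB d)).aemeasurable
    · exact ae_of_all _ fun x => measure_lt_top _ _
  simp_rw [heq]
  apply aux_conv μX _ 1
  · intro d x
    rw [abs_of_nonneg measureReal_nonneg]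
    exact measureReal_le_one
  · intro δ hδ
    refine tendsto_of_tendsto_of_tendsto_of_le_of_le tendsto_const_nhds
      (htrace (δ / (2 / ε ^ 2)) (by positivity)) (fun d => zero_le) (fun d => measure_mono ?_)
    intro x hx
    simp only [Set.mem_ofPred_eq] at hx ⊢
    rw [abs_of_nonneg measureReal_nonneg] at hx
    rw [div_lt_iff₀' (by positivity)]
    exact hx.trans_le (aux_cheb _ (aux_hess_symm (hL_smooth d) x) (s d) ε (hs_pos d) hε)

lemma aux_sup {d : ℕ} {L : (Fin d → ℝ) → ℝ} (hL : ContDiff ℝ 2 L) (x z : Fin d → ℝ)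
    (s ℓ t : ℝ) (ht : t ∈ Set.Ioo (0 : ℝ) 1) :
    |(∑ i, ∑ j, z i * ((hessian L (x + (t * ℓ / s) • z) - hessian L x) i j) * z j) / s ^ 2|
    ≤ ⨆ t ∈ Set.Ioo (0 : ℝ) 1,
      |(∑ i, ∑ j, z i * ((hessian L (x + (t * ℓ / s) • z) - hessian L x) i j) * z j) / s ^ 2| := by
  set F : ℝ → ℝ := fun t =>
    |(∑ i, ∑ j, z i * ((hessian L (x + (t * ℓ / s) • z) - hessian L x) i j) * z j) / s ^ 2| with hF
  have hc : Continuous F := by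
    have hc : ∀ i j, Continuous (fun t : ℝ => hessian L (x + (t * ℓ / s) • z) i j) :=
      fun i j => (aux_hess_cont hL i j).comp (by fun_prop)
    simp only [hF, Matrix.sub_apply]
    fun_prop
  obtain ⟨C, hC⟩ := (isCompact_Icc (a := (0 : ℝ)) (b := 1)).bddAbove_image hc.continuousOn
  have hC0 : 0 ≤ C := (abs_nonneg _).trans (hC ⟨0, by simp, rfl⟩)
  have hb : BddAbove (Set.range fun t => ⨆ _ : t ∈ Set.Ioo (0 : ℝ) 1, F t) := by
    refine ⟨C, ?_⟩
    rintro _ ⟨u, rfl⟩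
    by_cases hu : u ∈ Set.Ioo (0 : ℝ) 1
    · simp only [ciSup_pos hu]
      exact hC ⟨u, Set.Ioo_subset_Icc_self hu, rfl⟩
    · simp only [hu, Real.iSup_of_isEmpty]
      exact hC0
  refine le_trans ?_ (le_ciSup hb t)
  simp only [ciSup_pos ht]
  exact le_rfl

lemma aux_A {d : ℕ} {L : (Fin d → ℝ) → ℝ} (hL : ContDiff ℝ 2 L) (μ : Measure (Fin d → ℝ))
    [IsProbabilityMeasure μ] (s ℓ m : ℝ) (f : ℝ → ℝ) (hf : Continuous f) (B : ℝ)
    (hB : ∀ x, |f x| ≤ B) :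
    ∫ p, f (ℓ / s * (∑ i, fderiv ℝ L p.1 (Pi.single i 1) * p.2 i) + m)
      ∂(μ.prod (_root_.stdGaussian d))
    = ∫ x, (∫ u, f (ℓ * (Real.sqrt (gradNormSq L x) / s) * u + m) ∂(gaussianReal 0 1)) ∂μ := by
  have hγ := aux_prob
  have hc : ∀ i, Continuous (fun x => fderiv ℝ L x (Pi.single i 1)) :=
    fun i => (aux_cd hL _).continuous
  rw [integral_prod]
  · congr 1
    funext x
    have h := aux_lin (fun i => fderiv ℝ L x (Pi.single i 1)) (ℓ / s)
      (ℓ * (Real.sqrt (gradNormSq L x) / s)) (by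
        rw [mul_pow, div_pow, Real.sq_sqrt (by unfold gradNormSq; positivity)]
        unfold gradNormSq
        ring)
    have h1 := integral_map (μ := _root_.stdGaussian d)
      (φ := fun z => ℓ / s * ∑ i, fderiv ℝ L x (Pi.single i 1) * z i) (f := fun y => f (y + m))
      (Continuous.measurable (by fun_prop)).aemeasurable
      (by fun_prop)
    have h2 := integral_map (μ := gaussianReal 0 1)
      (φ := fun u => ℓ * (Real.sqrt (gradNormSq L x) / s) * u) (f := fun y => f (y + m))
      (by fun_prop)
      (by fun_prop)
    rw [← h1, h, h2]
  · refine Integrable.of_bound (C := B) ?_ (ae_of_all _ fun p => hB _)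
    apply Continuous.aestronglyMeasurable
    have hc' : ∀ i, Continuous (fun p : (Fin d → ℝ) × (Fin d → ℝ) =>
      fderiv ℝ L p.1 (Pi.single i 1)) := fun i => (hc i).comp continuous_fst
    fun_prop

set_option maxHeartbeats 400000 in
/-- Gaussian limit of the log-target increment.  Under conditions
(i)–(iv) on the targets `π^(d)` with scalings `s^(d)` and `λ^(d) = ℓ/s^(d)`,
`L^(d)(X^(d) + λ^(d) Z^(d)) − L^(d)(X^(d))` converges in distribution to
`N(−ℓ²/2, ℓ²)` (stated via convergence of integrals of bounded continuous
test functions). -/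
theorem stmt5
    (pden : (d : ℕ) → (Fin d → ℝ) → ℝ) (hπ_pos : ∀ d x, 0 < pden d x)
    (L : (d : ℕ) → (Fin d → ℝ) → ℝ)
    (hL : ∀ d, L d = fun x => Real.log (pden d x))
    (hL_smooth : ∀ d, ContDiff ℝ 2 (L d))
    (μX : (d : ℕ) → Measure (Fin d → ℝ))
    (hμX : ∀ d, μX d = volume.withDensity fun x => ENNReal.ofReal (pden d x))
    (hμX_prob : ∀ d, IsProbabilityMeasure (μX d))
    (s : ℕ → ℝ) (hs_pos : ∀ d, 0 < s d)
    -- (i) ‖∇L^(d)(X)‖ / s^(d) → 1 in probability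
    (hgrad : ∀ ε > (0 : ℝ), Tendsto (fun d =>
      μX d {x | ε < |Real.sqrt (gradNormSq (L d) x) / s d - 1|}) atTop (𝓝 0))
    -- (ii) ΔL^(d)(X) / (s^(d))² → −1 in probability
    (hlap : ∀ ε > (0 : ℝ), Tendsto (fun d =>
      μX d {x | ε < |Matrix.trace (hessian (L d) x) / (s d) ^ 2 + 1|}) atTop (𝓝 0))
    -- (iii) Trace[(H^(d)(X))²] / (s^(d))⁴ → 0 in probability
    (htrace : ∀ ε > (0 : ℝ), Tendsto (fun d =>
      μX d {x | ε < |Matrix.trace (hessian (L d) x * hessian (L d) x) / (s d) ^ 4|})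
      atTop (𝓝 0))
    -- (iv) regularity of the Hessian
    (hhess_reg : ∀ σ > (0 : ℝ), ∀ ε > (0 : ℝ), Tendsto (fun d =>
      ((μX d).prod (stdGaussian d)) {p | ε < ⨆ t ∈ Set.Ioo (0 : ℝ) 1,
        |(∑ i, ∑ j, p.2 i *
            ((hessian (L d) (p.1 + (t * σ / s d) • p.2) - hessian (L d) p.1) i j) * p.2 j)
          / (s d) ^ 2|}) atTop (𝓝 0))
    (ℓ : ℝ) (hℓ : 0 < ℓ) (lam : ℕ → ℝ) (hlam : ∀ d, lam d = ℓ / s d) :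
    ∀ g : BoundedContinuousFunction ℝ ℝ,
      Tendsto (fun d => ∫ p : (Fin d → ℝ) × (Fin d → ℝ),
          g (L d (p.1 + lam d • p.2) - L d p.1) ∂((μX d).prod (stdGaussian d)))
        atTop (𝓝 (∫ v, g v ∂(gaussianReal (-ℓ ^ 2 / 2) ⟨ℓ ^ 2, sq_nonneg ℓ⟩))) := by
  have hγ := aux_prob
  intro g
  have hYc : ∀ d, Continuous (fun p : (Fin d → ℝ) × (Fin d → ℝ) =>
      L d (p.1 + lam d • p.2) - L d p.1) := by
    intro d
    have := (hL_smooth d).continuous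
    fun_prop
  obtain ⟨μs, hμs⟩ : ∃ μs : ℕ → ProbabilityMeasure ℝ, ∀ d, (μs d : Measure ℝ) =
      ((μX d).prod (_root_.stdGaussian d)).map (fun p => L d (p.1 + lam d • p.2) - L d p.1) :=
    ⟨fun d => ⟨_, Measure.isProbabilityMeasure_map (hYc d).measurable.aemeasurable⟩, fun d => rfl⟩
  obtain ⟨v, hv⟩ : ∃ v : NNReal, v = ⟨ℓ ^ 2, sq_nonneg ℓ⟩ := ⟨_, rfl⟩
  rw [← hv]
  obtain ⟨ν, hν⟩ : ∃ ν : ProbabilityMeasure ℝ, (ν : Measure ℝ) = gaussianReal (-ℓ ^ 2 / 2) v :=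
    ⟨⟨gaussianReal (-ℓ ^ 2 / 2) v, instIsProbabilityMeasureGaussianReal _ _⟩, rfl⟩
  have key : Tendsto μs atTop (𝓝 ν) := by
    rw [tendsto_iff_forall_lipschitz_integral_tendsto]
    rintro f ⟨C, hC⟩ ⟨K, hK⟩
    have hfc : Continuous f := hK.continuous
    have hfB : ∀ x, |f x| ≤ |f 0| + C := by
      intro x
      have := hC x 0
      rw [Real.dist_eq] at this
      have h2 := abs_sub_abs_le_abs_sub (f x) (f 0)
      linarith
    have hfK : ∀ x y, |f x - f y| ≤ K * |x - y| := by
      intro x y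
      have := hK.dist_le_mul x y
      rwa [Real.dist_eq, Real.dist_eq] at this
    have hK0 : (0 : ℝ) ≤ K := K.2
    simp only [hμs, hν]
    have e0 : ∀ d, ∫ ω, f ω ∂(((μX d).prod (_root_.stdGaussian d)).map
        (fun p => L d (p.1 + lam d • p.2) - L d p.1))
        = ∫ p, f (L d (p.1 + lam d • p.2) - L d p.1) ∂((μX d).prod (_root_.stdGaussian d)) :=
      fun d => integral_map (hYc d).measurable.aemeasurable (by fun_prop)
    simp_rw [e0]
    have eT : ∫ v, f v ∂(gaussianReal (-ℓ ^ 2 / 2) v)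
        = ∫ u, f (ℓ * u + (-ℓ ^ 2 / 2)) ∂(gaussianReal 0 1) := by
      have h1 : gaussianReal (-ℓ ^ 2 / 2) v
          = ((gaussianReal 0 1).map (ℓ * ·)).map (· + (-ℓ ^ 2 / 2)) := by
        rw [gaussianReal_map_const_mul, gaussianReal_map_add_const]
        congr 1
        · simp
        · rw [hv, mul_one]
          rfl
      rw [h1, Measure.map_map (by fun_prop) (by fun_prop),
        integral_map (by fun_prop) (by fun_prop)]
      rfl
    rw [eT]
    -- the approximating variables
    have hAc : ∀ d, Continuous (fun p : (Fin d → ℝ) × (Fin d → ℝ) =>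
        ℓ / s d * (∑ i, fderiv ℝ (L d) p.1 (Pi.single i 1) * p.2 i) + (-ℓ ^ 2 / 2)) := by
      intro d
      have hc' : ∀ i, Continuous (fun p : (Fin d → ℝ) × (Fin d → ℝ) =>
        fderiv ℝ (L d) p.1 (Pi.single i 1)) :=
          fun i => ((aux_cd (hL_smooth d) _).continuous).comp continuous_fst
      fun_prop
    have h1 : Tendsto (fun d => ∫ p, (f (L d (p.1 + lam d • p.2) - L d p.1)
        - f (ℓ / s d * (∑ i, fderiv ℝ (L d) p.1 (Pi.single i 1) * p.2 i) + (-ℓ ^ 2 / 2)))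
        ∂((μX d).prod (_root_.stdGaussian d))) atTop (𝓝 0) := by
      apply aux_conv (fun d => (μX d).prod (_root_.stdGaussian d)) _ C
      · intro d p
        have := hC (L d (p.1 + lam d • p.2) - L d p.1)
          (ℓ / s d * (∑ i, fderiv ℝ (L d) p.1 (Pi.single i 1) * p.2 i) + (-ℓ ^ 2 / 2))
        rwa [Real.dist_eq] at this
      · intro ε hε
        set δ : ℝ := ε / (K + 1) / (ℓ ^ 2 / 2) / 3 with hδ
        have hδ0 : 0 < δ := by positivity
        have hδe : (K + 1) * (ℓ ^ 2 / 2 * (3 * δ)) = ε := by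
          rw [hδ]; field_simp
        have q1 := aux_quadP L hL_smooth μX hμX_prob s hs_pos htrace δ hδ0
        have q2 := hlap δ hδ0
        have q3 := hhess_reg ℓ hℓ δ hδ0
        have q2' : Tendsto (fun d => ((μX d).prod (_root_.stdGaussian d))
            (Prod.fst ⁻¹' {x | δ < |Matrix.trace (hessian (L d) x) / (s d) ^ 2 + 1|}))
            atTop (𝓝 0) := by
          refine q2.congr fun d => ?_
          have hc : ∀ i j, Continuous (fun x => hessian (L d) x i j) :=
            fun i j => aux_hess_cont (hL_smooth d) i j
          have hm : MeasurableSet {x | δ < |Matrix.trace (hessian (L d) x) / (s d) ^ 2 + 1|} := by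
            apply IsOpen.measurableSet
            apply isOpen_lt continuous_const
            simp only [Matrix.trace, Matrix.diag]
            fun_prop
          exact (measurePreserving_fst.measure_preimage hm.nullMeasurableSet).symm
        have q := (q1.add q2').add q3
        simp only [add_zero] at q
        refine tendsto_of_tendsto_of_tendsto_of_le_of_le tendsto_const_nhds q
          (fun d => zero_le) (fun d => ?_)
        refine le_trans (measure_mono ?_) ((measure_union_le _ _).trans
          (add_le_add_left (measure_union_le _ _) _))
        intro p hp
        by_contra hcon
        simp only [Set.mem_union, Set.mem_preimage, Set.mem_ofPred_eq, not_or, not_lt] at hcon hp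
        obtain ⟨⟨c1, c2⟩, c3⟩ := hcon
        have hsd := hs_pos d
        obtain ⟨t, ht, htay⟩ := aux_taylor (hL_smooth d) p.1 p.2 (lam d)
        have c4 := (aux_sup (hL_smooth d) p.1 p.2 (s d) ℓ t ht).trans c3
        have hb := hfK (L d (p.1 + lam d • p.2) - L d p.1)
          (ℓ / s d * (∑ i, fderiv ℝ (L d) p.1 (Pi.single i 1) * p.2 i) + (-ℓ ^ 2 / 2))
        have hsplit : (∑ i, ∑ j, p.2 i *
            ((hessian (L d) (p.1 + (t * ℓ / s d) • p.2) - hessian (L d) p.1) i j) * p.2 j)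
            = (∑ i, ∑ j, p.2 i * hessian (L d) (p.1 + (t * ℓ / s d) • p.2) i j * p.2 j)
              - ∑ i, ∑ j, p.2 i * hessian (L d) p.1 i j * p.2 j := by
          simp only [Matrix.sub_apply, mul_sub, sub_mul, Finset.sum_sub_distrib]
        rw [hsplit] at c4
        rw [hlam d, ← mul_div_assoc] at htay
        rw [hlam d] at hb hp
        rw [htay] at hb hp
        generalize (∑ i, ∑ j, p.2 i * hessian (L d) (p.1 + (t * ℓ / s d) • p.2) i j * p.2 j) = Q1
          at *
        generalize (∑ i, ∑ j, p.2 i * hessian (L d) p.1 i j * p.2 j) = Q0 at *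
        generalize (∑ i, fderiv ℝ (L d) p.1 (Pi.single i 1) * p.2 i) = G at *
        generalize Matrix.trace (hessian (L d) p.1) = T at *
        have hdiff : (ℓ / s d * G + (ℓ / s d) ^ 2 / 2 * Q1) - (ℓ / s d * G + (-ℓ ^ 2 / 2))
            = ℓ ^ 2 / 2 * ((Q0 / s d ^ 2 - T / s d ^ 2) + (T / s d ^ 2 + 1)
              + (Q1 - Q0) / s d ^ 2) := by
          field_simp; ring
        rw [hdiff, abs_mul, abs_of_nonneg (by positivity : 0 ≤ ℓ ^ 2 / 2)] at hb
        have hsum : |(Q0 / s d ^ 2 - T / s d ^ 2) + (T / s d ^ 2 + 1)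
              + (Q1 - Q0) / s d ^ 2| ≤ 3 * δ := by
          refine (abs_add_three _ _ _).trans ?_
          linarith
        have hfin : K * (ℓ ^ 2 / 2 * |(Q0 / s d ^ 2 - T / s d ^ 2) + (T / s d ^ 2 + 1)
              + (Q1 - Q0) / s d ^ 2|) ≤ (K + 1) * (ℓ ^ 2 / 2 * (3 * δ)) := by
          gcongr
          linarith
        linarith
    have hu : Integrable (fun u : ℝ => |u|) (gaussianReal 0 1) := by
      simpa using (aux_int 1).abs
    set M : ℝ := ∫ u, |u| ∂(gaussianReal 0 1) with hM
    have hM0 : 0 ≤ M := integral_nonneg fun u => abs_nonneg u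
    have hfi : ∀ (r : ℝ), Integrable (fun u => f (r * u + (-ℓ ^ 2 / 2))) (gaussianReal 0 1) :=
      fun r => Integrable.of_bound (C := |f 0| + C)
        (Continuous.aestronglyMeasurable (by fun_prop)) (ae_of_all _ fun p => hfB _)
    have h3 : Tendsto (fun d => ∫ x, ((∫ u, f (ℓ * (Real.sqrt (gradNormSq (L d) x) / s d) * u
          + (-ℓ ^ 2 / 2)) ∂(gaussianReal 0 1))
        - ∫ u, f (ℓ * u + (-ℓ ^ 2 / 2)) ∂(gaussianReal 0 1)) ∂(μX d)) atTop (𝓝 0) := by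
      apply aux_conv μX _ C
      · intro d x
        rw [← integral_sub (hfi _) (hfi _)]
        have := norm_integral_le_of_norm_le_const (μ := gaussianReal 0 1) (C := C)
          (f := fun u => f (ℓ * (Real.sqrt (gradNormSq (L d) x) / s d) * u
          + (-ℓ ^ 2 / 2)) - f (ℓ * u + (-ℓ ^ 2 / 2))) (ae_of_all _ fun u => by
            rw [← dist_eq_norm]; exact hC _ _)
        simpa using this
      · intro ε hε
        refine tendsto_of_tendsto_of_tendsto_of_le_of_le tendsto_const_nhds
          (hgrad (ε / ((K * ℓ * M) + 1)) (by positivity)) (fun d => zero_le)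
          (fun d => measure_mono ?_)
        intro x hx
        simp only [Set.mem_ofPred_eq] at hx ⊢
        rw [div_lt_iff₀' (by positivity)]
        refine hx.trans_le ?_
        rw [← integral_sub (hfi _) (hfi _)]
        have := norm_integral_le_of_norm_le
          (hu.const_mul (K * ℓ * |Real.sqrt (gradNormSq (L d) x) / s d - 1|))
          (f := fun u => f (ℓ * (Real.sqrt (gradNormSq (L d) x) / s d) * u
          + (-ℓ ^ 2 / 2)) - f (ℓ * u + (-ℓ ^ 2 / 2))) (ae_of_all _ fun u => by
            refine (hfK _ _).trans (le_of_eq ?_)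
            rw [show ℓ * (Real.sqrt (gradNormSq (L d) x) / s d) * u
              + (-ℓ ^ 2 / 2) - (ℓ * u + (-ℓ ^ 2 / 2))
              = ℓ * (Real.sqrt (gradNormSq (L d) x) / s d - 1) * u by ring, abs_mul, abs_mul,
              abs_of_pos hℓ]
            ring)
        rw [integral_const_mul, Real.norm_eq_abs, ← hM] at this
        refine this.trans ?_
        nlinarith [abs_nonneg (Real.sqrt (gradNormSq (L d) x) / s d - 1)]
    have h4 := h1.add h3
    rw [add_zero] at h4
    rw [← tendsto_sub_nhds_zero_iff]
    refine h4.congr fun d => ?_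
    rw [integral_sub, integral_sub, aux_A (hL_smooth d) (μX d) (s d) ℓ _ f hfc _ hfB]
    · simp
    · have hc : Continuous (fun x => gradNormSq (L d) x) := by
        have := fun i => (aux_cd (hL_smooth d) (Pi.single i 1)).continuous
        unfold gradNormSq
        fun_prop
      have hi : Integrable (fun q : (Fin d → ℝ) × ℝ =>
          f (ℓ * (Real.sqrt (gradNormSq (L d) q.1) / s d) * q.2 + (-ℓ ^ 2 / 2)))
          ((μX d).prod (gaussianReal 0 1)) :=
        Integrable.of_bound (C := |f 0| + C)
          (Continuous.aestronglyMeasurable (by fun_prop)) (ae_of_all _ fun p => hfB _)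
      exact hi.integral_prod_left
    · exact integrable_const _
    · exact Integrable.of_bound (C := |f 0| + C)
        (Continuous.aestronglyMeasurable (hfc.comp (hYc d))) (ae_of_all _ fun p => hfB _)
    · exact Integrable.of_bound (C := |f 0| + C)
        (Continuous.aestronglyMeasurable (hfc.comp (hAc d))) (ae_of_all _ fun p => hfB _)
  have h := (ProbabilityMeasure.tendsto_iff_forall_integral_tendsto.1 key) g
  simp only [hμs, hν] at h
  refine h.congr fun d => ?_
  exact integral_map (hYc d).measurable.aemeasurable (by fun_prop)
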